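/- Converse bound R_{Z_Σ} ≥ 1: in the cyclic hierarchical secure aggregation model with a source key and relay security: H(Z_Σ) ≥ L. -/

import Mathlib

/-!
The proof is an averaging argument over the relays. Write `M i` for the tuple of messages received
by relay `i`, `W` for all inputs, `Z` for all keys, and `V k` for all keys together with all inputs
except `W k`.

* Relay security gives `H(M i) = H(M i | W) ≤ H(Z) ≤ H(Zsig)` for every relay `i`, because `M i` is
  a function of `(W, Z)`.
* Given `V k`, the messages of user `k` determine everything, in particular the sum of the inputs,
  hence `W k`. So `L = H(W k | V k) ≤ ∑ i ∈ Bset k, H(X k i | V k)` (`ent_family_le`).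
* The messages of users other than `k` are functions of `V k`, so the chain rule for `M i` gives
  `∑ k ∈ Uset i, H(X k i | V k) ≤ H(M i | Z) ≤ H(M i)` (`sum_le_ent_family`).

Summing over all `k` and exchanging the order of summation, `K * L ≤ ∑ i, H(M i) ≤ K * H(Zsig)`.

Apart from monotonicity (`ent_mono`), which is a pointwise comparison of probabilities, the entropy
inequalities come from Gibbs' inequality (`ent_le_of_sum_le_one`), mostly through
submodularity in the form `ent_submod`: if `A` and `B` both determine `D`, and `(A, B)` determines
`C`, then `H(C) + H(D) ≤ H(A) + H(B)`.
-/

open scoped BigOperators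

noncomputable def pr {Ω : Type} [Fintype Ω] {α : Type} [DecidableEq α]
    (p : Ω → ℝ) (X : Ω → α) (a : α) : ℝ :=
  ∑ ω, if X ω = a then p ω else 0

noncomputable def ent {Ω : Type} [Fintype Ω] {α : Type} [Fintype α] [DecidableEq α]
    (q : ℕ) (p : Ω → ℝ) (X : Ω → α) : ℝ :=
  -∑ a, pr p X a * Real.logb q (pr p X a)

noncomputable def condEnt {Ω : Type} [Fintype Ω] {α β : Type}
    [Fintype α] [DecidableEq α] [Fintype β] [DecidableEq β]
    (q : ℕ) (p : Ω → ℝ) (X : Ω → α) (Y : Ω → β) : ℝ :=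
  ent q p (fun ω => (X ω, Y ω)) - ent q p Y

noncomputable def mutInfo {Ω : Type} [Fintype Ω] {α β : Type}
    [Fintype α] [DecidableEq α] [Fintype β] [DecidableEq β]
    (q : ℕ) (p : Ω → ℝ) (X : Ω → α) (Y : Ω → β) : ℝ :=
  ent q p X + ent q p Y - ent q p (fun ω => (X ω, Y ω))

noncomputable def condMutInfo {Ω : Type} [Fintype Ω] {α β γ : Type}
    [Fintype α] [DecidableEq α] [Fintype β] [DecidableEq β] [Fintype γ] [DecidableEq γ]
    (q : ℕ) (p : Ω → ℝ) (X : Ω → α) (Y : Ω → β) (Z : Ω → γ) : ℝ :=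
  condEnt q p X Z + condEnt q p Y Z - condEnt q p (fun ω => (X ω, Y ω)) Z

def IsPMF {Ω : Type} [Fintype Ω] (p : Ω → ℝ) : Prop :=
  (∀ ω, 0 ≤ p ω) ∧ ∑ ω, p ω = 1

def IndepRV {Ω : Type} [Fintype Ω] {α β : Type} [DecidableEq α] [DecidableEq β]
    (p : Ω → ℝ) (X : Ω → α) (Y : Ω → β) : Prop :=
  ∀ a b, pr p (fun ω => (X ω, Y ω)) (a, b) = pr p X a * pr p Y b

/-- The set of `B` relays `{k, k+1, …, k+B−1}` (indices mod `K`) associated with user `k`. -/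
def Bset (K B : ℕ) (k : Fin K) : Finset (Fin K) :=
  (Finset.range B).image fun j => ⟨((k : ℕ) + j) % K, Nat.mod_lt _ k.pos⟩

/-- The set of users associated with relay `i`. -/
def Uset (K B : ℕ) (i : Fin K) : Finset (Fin K) :=
  Finset.univ.filter fun k => i ∈ Bset K B k

open Finset

/-! ### Entropy inequalities -/

section Entropy

variable {Ω : Type} [Fintype Ω] {p : Ω → ℝ}
variable {α β γ δ : Type} [DecidableEq α] [DecidableEq β] [DecidableEq γ] [DecidableEq δ]

/-- `Det p X Y` says that `X` is a function of `Y` on the support of `p`. -/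
def Det (p : Ω → ℝ) (X : Ω → α) (Y : Ω → β) : Prop :=
  ∀ ω ω', p ω ≠ 0 → p ω' ≠ 0 → Y ω = Y ω' → X ω = X ω'

theorem sum_pr_mul [Fintype α] (X : Ω → α) (f : α → ℝ) :
    ∑ a, pr p X a * f a = ∑ ω, p ω * f (X ω) := by
  simp only [pr, Finset.sum_mul, ite_mul, zero_mul]
  rw [Finset.sum_comm]
  simp

theorem sum_pr [Fintype α] (hp : IsPMF p) (X : Ω → α) : ∑ a, pr p X a = 1 := by
  have := sum_pr_mul (p := p) X (fun _ => 1)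
  simpa [hp.2] using this

theorem pr_nonneg (hp : IsPMF p) (X : Ω → α) (a : α) : 0 ≤ pr p X a :=
  Finset.sum_nonneg fun ω _ => by split_ifs <;> simp [hp.1 ω]

theorem pr_pos (hp : IsPMF p) (X : Ω → α) {ω : Ω} (h : p ω ≠ 0) : 0 < pr p X (X ω) := by
  refine lt_of_lt_of_le (lt_of_le_of_ne (hp.1 ω) h.symm) ?_
  have := Finset.single_le_sum (f := fun ω' => if X ω' = X ω then p ω' else 0)
    (fun ω' _ => by split_ifs <;> simp [hp.1 ω']) (Finset.mem_univ ω)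
  simpa [pr] using this

theorem sum_pr_pair [Fintype α] (X : Ω → α) (Y : Ω → β) (b : β) :
    ∑ a, pr p (fun ω => (X ω, Y ω)) (a, b) = pr p Y b := by
  simp only [pr]
  rw [Finset.sum_comm]
  refine Finset.sum_congr rfl fun ω _ => ?_
  by_cases h : Y ω = b <;> simp [h]

theorem pr_le_pr_of_det (hp : IsPMF p) {X : Ω → α} {Y : Ω → β} (h : Det p X Y) {ω : Ω}
    (hω : p ω ≠ 0) : pr p Y (Y ω) ≤ pr p X (X ω) := by
  refine Finset.sum_le_sum fun ω' _ => ?_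
  by_cases h0 : p ω' = 0
  · simp [h0]
  by_cases hY : Y ω' = Y ω
  · simp [hY, h _ _ h0 hω hY]
  · rw [if_neg hY]
    split_ifs <;> simp [hp.1 ω']

theorem ent_eq [Fintype α] (q : ℕ) (X : Ω → α) :
    ent q p X = -∑ ω, p ω * Real.logb q (pr p X (X ω)) := by
  rw [ent, sum_pr_mul X (fun a => Real.logb q (pr p X a))]

/-- Gibbs' inequality for a subprobability vector `r` that is positive on the support. -/
theorem ent_le_of_sum_le_one [Fintype α] {q : ℕ} (hq : 1 < q) (hp : IsPMF p) (X : Ω → α)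
    (r : α → ℝ) (hr : ∀ a, 0 ≤ r a) (hr' : ∀ ω, p ω ≠ 0 → 0 < r (X ω)) (h1 : ∑ a, r a ≤ 1) :
    ent q p X ≤ -∑ ω, p ω * Real.logb q (r (X ω)) := by
  have hlog : 0 < Real.log q := Real.log_pos (by exact_mod_cast hq)
  rw [ent_eq, neg_le_neg_iff]
  simp only [Real.logb, mul_div_assoc', ← Finset.sum_div]
  refine div_le_div_of_nonneg_right ?_ hlog.le
  rw [← sub_nonpos, ← Finset.sum_sub_distrib]
  calc ∑ ω, (p ω * Real.log (r (X ω)) - p ω * Real.log (pr p X (X ω)))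
      ≤ ∑ ω, (p ω * (r (X ω) / pr p X (X ω)) - p ω) := by
        refine Finset.sum_le_sum fun ω _ => ?_
        by_cases h0 : p ω = 0
        · simp [h0]
        have h2 := pr_pos hp X h0
        have h3 := hr' ω h0
        rw [← mul_sub, ← Real.log_div h3.ne' h2.ne']
        have := mul_le_mul_of_nonneg_left (Real.log_le_sub_one_of_pos (div_pos h3 h2)) (hp.1 ω)
        linarith
    _ = ∑ a, pr p X a * (r a / pr p X a) - 1 := by
        rw [Finset.sum_sub_distrib, hp.2, sum_pr_mul X (fun a => r a / pr p X a)]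
    _ ≤ ∑ a, r a - 1 := by
        gcongr with a
        by_cases h0 : pr p X a = 0
        · simp [h0, hr a]
        · rw [mul_div_cancel₀ _ h0]
    _ ≤ 0 := by linarith

theorem ent_le_logb_card [Fintype α] {q : ℕ} (hq : 1 < q) (hp : IsPMF p) (X : Ω → α) :
    ent q p X ≤ Real.logb q (Fintype.card α) := by
  have hpos : ∀ ω : Ω, 0 < (1 : ℝ) / Fintype.card α := fun ω => by
    have : 0 < Fintype.card α := Fintype.card_pos_iff.2 ⟨X ω⟩
    positivity
  have h := ent_le_of_sum_le_one hq hp X (fun _ => 1 / (Fintype.card α : ℝ))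
    (fun _ => by positivity) (fun ω _ => hpos ω) (by
      simp only [sum_const, card_univ, nsmul_eq_mul, mul_one_div]
      exact div_self_le_one _)
  rw [← Finset.sum_mul, hp.2] at h
  simpa [Real.logb_inv] using h

theorem ent_mono [Fintype α] [Fintype β] {q : ℕ} (hq : 1 < q) (hp : IsPMF p)
    {X : Ω → α} {Y : Ω → β} (h : Det p X Y) : ent q p X ≤ ent q p Y := by
  rw [ent_eq, ent_eq, neg_le_neg_iff]
  refine Finset.sum_le_sum fun ω _ => ?_
  by_cases h0 : p ω = 0
  · simp [h0]
  exact mul_le_mul_of_nonneg_left (Real.logb_le_logb_of_le (by exact_mod_cast hq)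
    (pr_pos hp Y h0) (pr_le_pr_of_det hp h h0)) (hp.1 ω)

/-- `H(X | Y) = 0` forces `X` to be a function of `Y` on the support: `H(X | Y)` is a sum of
nonnegative terms, so `P(X = x, Y = y) = P(Y = y)` whenever `(x, y)` has positive probability. -/
theorem det_of_condEnt_eq_zero [Fintype α] [Fintype β] {q : ℕ} (hq : 1 < q) (hp : IsPMF p)
    {X : Ω → α} {Y : Ω → β} (h : condEnt q p X Y = 0) : Det p X Y := by
  have hq' : (1 : ℝ) < q := by exact_mod_cast hq
  intro ω ω' h0 h0' hY
  have hle : ∀ ω, p ω ≠ 0 → pr p (fun ω => (X ω, Y ω)) (X ω, Y ω) ≤ pr p Y (Y ω) := fun ω hω =>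
    pr_le_pr_of_det hp (X := Y) (Y := fun ω => (X ω, Y ω))
      (fun _ _ _ _ e => (Prod.ext_iff.1 e).2) hω
  have hpos : ∀ ω, p ω ≠ 0 → 0 < pr p (fun ω => (X ω, Y ω)) (X ω, Y ω) := fun ω hω =>
    pr_pos hp (fun ω => (X ω, Y ω)) hω
  have hsum : ∑ ω, p ω * (Real.logb q (pr p Y (Y ω)) -
      Real.logb q (pr p (fun ω => (X ω, Y ω)) (X ω, Y ω))) = 0 := by
    rw [condEnt, ent_eq, ent_eq] at h
    simp only [mul_sub, Finset.sum_sub_distrib]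
    linarith
  have hterm := (Finset.sum_eq_zero_iff_of_nonneg (fun ω _ => by
    by_cases h0 : p ω = 0
    · simp [h0]
    exact mul_nonneg (hp.1 ω) (sub_nonneg.2
      (Real.logb_le_logb_of_le hq' (hpos ω h0) (hle ω h0))))).1 hsum ω (Finset.mem_univ ω)
  have hlog := sub_eq_zero.1 ((mul_eq_zero.1 hterm).resolve_left h0)
  have heq : pr p Y (Y ω) = pr p (fun ω => (X ω, Y ω)) (X ω, Y ω) :=
    Real.logb_injOn_pos hq' (Set.mem_Ioi.2 ((hpos ω h0).trans_le (hle ω h0)))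
      (Set.mem_Ioi.2 (hpos ω h0)) hlog
  by_contra hX
  -- a second value of `X` over the same value of `Y` would make the inequality `hle` strict
  refine absurd heq (ne_of_gt ?_)
  refine Finset.sum_lt_sum (fun ω₁ _ => ?_) ⟨ω', Finset.mem_univ _, ?_⟩
  · by_cases h1 : Y ω₁ = Y ω
    · by_cases h2 : X ω₁ = X ω <;> simp [h1, h2, hp.1 ω₁]
    · simp [h1]
  · have : X ω' ≠ X ω := fun e => hX e.symm
    simp only [Prod.mk.injEq, this, false_and, if_false, hY, if_true]
    exact lt_of_le_of_ne (hp.1 _) h0'.symm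

/-- Submodularity, `H(X, Y, T) + H(T) ≤ H(X, T) + H(Y, T)`. -/
theorem ent_submod_pair [Fintype α] [Fintype β] [Fintype γ] {q : ℕ} (hq : 1 < q) (hp : IsPMF p)
    (X : Ω → α) (Y : Ω → β) (T : Ω → γ) :
    ent q p (fun ω => (X ω, Y ω, T ω)) + ent q p T ≤
      ent q p (fun ω => (X ω, T ω)) + ent q p (fun ω => (Y ω, T ω)) := by
  set PX := pr p (fun ω => (X ω, T ω)) with hPX
  set PY := pr p (fun ω => (Y ω, T ω)) with hPY
  have posX : ∀ ω, p ω ≠ 0 → 0 < PX (X ω, T ω) := fun ω h => pr_pos hp (fun ω => (X ω, T ω)) h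
  have posY : ∀ ω, p ω ≠ 0 → 0 < PY (Y ω, T ω) := fun ω h => pr_pos hp (fun ω => (Y ω, T ω)) h
  -- compare with the law under which `X` and `Y` are conditionally independent given `T`
  have h := ent_le_of_sum_le_one hq hp (fun ω => (X ω, Y ω, T ω))
    (fun a => PX (a.1, a.2.2) * PY (a.2.1, a.2.2) / pr p T a.2.2)
    (fun a => div_nonneg (mul_nonneg (pr_nonneg hp _ _) (pr_nonneg hp _ _)) (pr_nonneg hp _ _))
    (fun ω h => div_pos (mul_pos (posX ω h) (posY ω h)) (pr_pos hp T h)) (by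
      rw [Fintype.sum_prod_type]
      simp only [Fintype.sum_prod_type_right]
      simp only [← Finset.sum_div, ← Finset.mul_sum]
      rw [Finset.sum_comm]
      simp only [← Finset.sum_div, ← Finset.sum_mul]
      simp only [hPX, hPY, sum_pr_pair, mul_self_div_self]
      exact (sum_pr hp T).le)
  rw [ent_eq q T, ent_eq q (fun ω => (X ω, T ω)), ent_eq q (fun ω => (Y ω, T ω))]
  have e : ∑ ω, p ω * Real.logb q (PX (X ω, T ω) * PY (Y ω, T ω) / pr p T (T ω)) =
      ∑ ω, p ω * Real.logb q (PX (X ω, T ω)) + ∑ ω, p ω * Real.logb q (PY (Y ω, T ω))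
        - ∑ ω, p ω * Real.logb q (pr p T (T ω)) := by
    rw [← Finset.sum_add_distrib, ← Finset.sum_sub_distrib]
    refine Finset.sum_congr rfl fun ω _ => ?_
    by_cases h0 : p ω = 0
    · simp [h0]
    rw [Real.logb_div (mul_pos (posX ω h0) (posY ω h0)).ne' (pr_pos hp T h0).ne',
      Real.logb_mul (posX ω h0).ne' (posY ω h0).ne']
    ring
  simp only at h
  linarith

/-- Submodularity with functional dependence on the support in place of explicit tuples. -/
theorem ent_submod [Fintype α] [Fintype β] [Fintype γ] [Fintype δ] {q : ℕ} (hq : 1 < q)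
    (hp : IsPMF p) {A : Ω → α} {B : Ω → β} {C : Ω → γ} {D : Ω → δ}
    (hC : Det p C (fun ω => (A ω, B ω))) (hA : Det p D A) (hB : Det p D B) :
    ent q p C + ent q p D ≤ ent q p A + ent q p B := by
  have h := ent_submod_pair hq hp A B D
  have h1 : ent q p C ≤ ent q p (fun ω => (A ω, B ω, D ω)) := ent_mono hq hp
    fun ω ω' h0 h0' e => by
      simp only [Prod.mk.injEq] at e
      exact hC ω ω' h0 h0' (Prod.ext e.1 e.2.1)
  have h2 : ent q p (fun ω => (A ω, D ω)) ≤ ent q p A := ent_mono hq hp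
    fun ω ω' h0 h0' e => Prod.ext e (hA ω ω' h0 h0' e)
  have h3 : ent q p (fun ω => (B ω, D ω)) ≤ ent q p B := ent_mono hq hp
    fun ω ω' h0 h0' e => Prod.ext e (hB ω ω' h0 h0' e)
  linarith

theorem ent_pair_le [Fintype α] [Fintype β] {q : ℕ} (hq : 1 < q) (hp : IsPMF p)
    (X : Ω → α) (Y : Ω → β) :
    ent q p (fun ω => (X ω, Y ω)) ≤ ent q p X + ent q p Y := by
  have h := ent_submod hq hp (A := X) (B := Y) (C := fun ω => (X ω, Y ω)) (D := fun _ => ())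
    (fun _ _ _ _ e => e) (fun _ _ _ _ _ => rfl) (fun _ _ _ _ _ => rfl)
  have h0 : ent q p (fun _ => ()) = 0 := by
    rw [ent_eq]
    simp [pr, hp.2]
  linarith

theorem ent_pair_of_indep [Fintype α] [Fintype β] (q : ℕ) (hp : IsPMF p)
    {X : Ω → α} {Y : Ω → β} (h : IndepRV p X Y) :
    ent q p (fun ω => (X ω, Y ω)) = ent q p X + ent q p Y := by
  rw [ent_eq, ent_eq, ent_eq, ← neg_add, ← Finset.sum_add_distrib]
  congr 1
  refine Finset.sum_congr rfl fun ω _ => ?_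
  by_cases h0 : p ω = 0
  · simp [h0]
  rw [h, Real.logb_mul (pr_pos hp X h0).ne' (pr_pos hp Y h0).ne']
  ring

/-- Conditional subadditivity: `H((X i)_{i ∈ T} | V) ≤ ∑ i ∈ T, H(X i | V)`. -/
theorem ent_family_le {ι : Type} [DecidableEq ι] [Fintype α] [Fintype β] {q : ℕ} (hq : 1 < q)
    (hp : IsPMF p) (X : ι → Ω → α) (V : Ω → β) (T : Finset ι) :
    condEnt q p (fun ω => fun i : {i // i ∈ T} => X i.1 ω) V ≤ ∑ i ∈ T, condEnt q p (X i) V := by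
  induction T using Finset.induction_on with
  | empty =>
    rw [Finset.sum_empty, condEnt, sub_nonpos]
    refine ent_mono hq hp fun ω ω' _ _ e => Prod.ext ?_ e
    funext i
    exact absurd i.2 (Finset.notMem_empty _)
  | insert k T hk ih =>
    rw [Finset.sum_insert hk]
    have h := ent_submod hq hp
      (A := fun ω => (fun i : {i // i ∈ T} => X i.1 ω, V ω)) (B := fun ω => (X k ω, V ω))
      (C := fun ω => (fun i : {i // i ∈ insert k T} => X i.1 ω, V ω)) (D := V)
      (fun ω ω' _ _ e => by
        simp only [Prod.mk.injEq] at e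
        refine Prod.ext ?_ e.1.2
        funext i
        rcases Finset.mem_insert.1 i.2 with hi | hi
        · simpa [hi] using e.2.1
        · exact congrFun e.1.1 ⟨i.1, hi⟩)
      (fun _ _ _ _ e => (Prod.ext_iff.1 e).2) (fun _ _ _ _ e => (Prod.ext_iff.1 e).2)
    simp only [condEnt] at ih ⊢
    linarith

/-- A chain-rule lower bound: if each `V k` determines `Z` and all `X j` with `j ∈ T`, `j ≠ k`,
then `∑ k ∈ T, H(X k | V k) ≤ H((X k)_{k ∈ T} | Z)`. -/
theorem sum_le_ent_family {ι : Type} [DecidableEq ι] [Fintype α] [Fintype γ]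
    (V' : ι → Type) [∀ k, Fintype (V' k)] [∀ k, DecidableEq (V' k)] {q : ℕ} (hq : 1 < q)
    (hp : IsPMF p) (X : ι → Ω → α) (V : ∀ k, Ω → V' k) (Z : Ω → γ) (T : Finset ι)
    (hZ : ∀ k, Det p Z (V k)) (hX : ∀ k, ∀ j ∈ T, j ≠ k → Det p (X j) (V k)) :
    ∑ k ∈ T, condEnt q p (X k) (V k) ≤
      condEnt q p (fun ω => fun k : {k // k ∈ T} => X k.1 ω) Z := by
  induction T using Finset.induction_on with
  | empty =>
    rw [Finset.sum_empty, condEnt, sub_nonneg]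
    exact ent_mono hq hp fun ω ω' _ _ e => (Prod.ext_iff.1 e).2
  | insert k T hk ih =>
    rw [Finset.sum_insert hk]
    have ih := ih fun k j hj => hX k j (Finset.mem_insert_of_mem hj)
    have h := ent_submod hq hp
      (A := fun ω => (fun i : {i // i ∈ insert k T} => X i.1 ω, Z ω)) (B := V k)
      (C := fun ω => (X k ω, V k ω)) (D := fun ω => (fun i : {i // i ∈ T} => X i.1 ω, Z ω))
      (fun ω ω' _ _ e => by
        simp only [Prod.mk.injEq] at e
        exact Prod.ext (congrFun e.1.1 ⟨k, Finset.mem_insert_self _ _⟩) e.2)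
      (fun ω ω' _ _ e => by
        simp only [Prod.mk.injEq] at e
        refine Prod.ext ?_ e.2
        funext i
        exact congrFun e.1 ⟨i.1, Finset.mem_insert_of_mem i.2⟩)
      (fun ω ω' h0 h0' e => by
        refine Prod.ext ?_ (hZ k ω ω' h0 h0' e)
        funext i
        exact hX k i.1 (Finset.mem_insert_of_mem i.2) (fun e => hk (e ▸ i.2)) ω ω' h0 h0' e)
    simp only [condEnt] at ih ⊢
    linarith

end Entropy

/-! ### The averaging argument over the relays -/

/-- converse bound `R_{Z_Σ} ≥ 1` under relay security: `H(Z_Σ) ≥ L`. -/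
theorem hsa_RZsigma_ge_one
    {K B L : ℕ} (hK : 2 ≤ K) (hB1 : 1 ≤ B) (hBK : B ≤ K) (hL : 1 ≤ L)
    {F : Type} [Field F] [Fintype F] [DecidableEq F]
    {Ω : Type} [Fintype Ω] (p : Ω → ℝ) (hp : IsPMF p)
    {ζ χ υ : Type} [Fintype ζ] [DecidableEq ζ] [Fintype χ] [DecidableEq χ]
    [Fintype υ] [DecidableEq υ]
    (W : Fin K → Ω → (Fin L → F)) (Z : Fin K → Ω → ζ)
    (Xm : Fin K → Fin K → Ω → χ) (Y : Fin K → Ω → υ)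
    -- the inputs are i.i.d. uniform on 𝔽_q^L
    (hW : ∀ w : Fin K → Fin L → F,
      pr p (fun ω => fun k => W k ω) w = 1 / (Fintype.card F : ℝ) ^ (K * L))
    -- the inputs are independent of the keys
    (hWZ : IndepRV p (fun ω => fun k => W k ω) (fun ω => fun k => Z k ω))
    -- user messages are functions of the user's input and key
    (hX : ∀ k : Fin K,
      condEnt (Fintype.card F) p
        (fun ω => fun i : {i // i ∈ Bset K B k} => Xm k i.1 ω)
        (fun ω => (W k ω, Z k ω)) = 0)
    -- relay messages are functions of the received messages
    (hY : ∀ i : Fin K,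
      condEnt (Fintype.card F) p (Y i)
        (fun ω => fun k : {k // k ∈ Uset K B i} => Xm k.1 i ω) = 0)
    -- the server recovers the sum of the inputs
    (hRec : condEnt (Fintype.card F) p
      (fun ω => ∑ k, W k ω) (fun ω => fun i => Y i ω) = 0)
    {σ : Type} [Fintype σ] [DecidableEq σ]
    (Zsig : Ω → σ)
    -- all individual keys are generated from the source key
    (hZsig : condEnt (Fintype.card F) p (fun ω => fun k => Z k ω) Zsig = 0)
    -- relay security
    (hRelaySec : ∀ i : Fin K,
      mutInfo (Fintype.card F) p
        (fun ω => fun k : {k // k ∈ Uset K B i} => Xm k.1 i ω)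
        (fun ω => fun k => W k ω) = 0) :
    ent (Fintype.card F) p Zsig ≥ L := by
  have hq : 1 < Fintype.card F := Fintype.one_lt_card
  have hq' : (1 : ℝ) < Fintype.card F := by exact_mod_cast hq
  set q := Fintype.card F with hqdef
  have mem_U : ∀ k i, k ∈ Uset K B i ↔ i ∈ Bset K B k := fun k i => by simp [Uset]
  have entW : ent q p (fun ω => fun k => W k ω) = K * L := by
    rw [ent_eq]
    simp only [hW]
    rw [← Finset.sum_mul, hp.2, one_div, Real.logb_inv, Real.logb_pow,
      Real.logb_self_eq_one hq']
    push_cast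
    ring
  have entWZ := ent_pair_of_indep q hp hWZ
  have dX : ∀ k, ∀ i ∈ Bset K B k, Det p (Xm k i) (fun ω => (W k ω, Z k ω)) :=
    fun k i hi ω ω' h0 h0' e =>
      congrFun (det_of_condEnt_eq_zero hq hp (hX k) ω ω' h0 h0' e) ⟨i, hi⟩
  have dY := fun i => det_of_condEnt_eq_zero hq hp (hY i)
  have dRec := det_of_condEnt_eq_zero hq hp hRec
  have hZle : ent q p (fun ω => fun k => Z k ω) ≤ ent q p Zsig :=
    ent_mono hq hp (det_of_condEnt_eq_zero hq hp hZsig)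
  have hM : ∀ i, ent q p (fun ω => fun k : {k // k ∈ Uset K B i} => Xm k.1 i ω) ≤
      ent q p Zsig := by
    intro i
    have h := hRelaySec i
    rw [mutInfo] at h
    have h2 : ent q p (fun ω => ((fun k : {k // k ∈ Uset K B i} => Xm k.1 i ω),
        (fun k => W k ω))) ≤ ent q p (fun ω => ((fun k => W k ω), (fun k => Z k ω))) := by
      refine ent_mono hq hp fun ω ω' h0 h0' e => ?_
      simp only [Prod.mk.injEq] at e
      refine Prod.ext ?_ e.1
      funext k
      exact dX k.1 i ((mem_U _ _).1 k.2) ω ω' h0 h0'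
        (Prod.ext (congrFun e.1 k.1) (congrFun e.2 k.1))
    linarith
  -- conditioning on `V k` leaves `W k` as the only unknown
  let V : ∀ k : Fin K, Ω → ({j : Fin K // j ≠ k} → Fin L → F) × (Fin K → ζ) :=
    fun k ω => (fun j => W j.1 ω, fun j => Z j ω)
  have dXV : ∀ k i j, i ∈ Bset K B j → j ≠ k → Det p (Xm j i) (V k) := by
    intro k i j hi hj ω ω' h0 h0' e
    simp only [V, Prod.mk.injEq] at e
    exact dX j i hi ω ω' h0 h0' (Prod.ext (congrFun e.1 ⟨j, hj⟩) (congrFun e.2 j))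
  have entV : ∀ k, ent q p (V k) + L ≤ ent q p (fun ω => ((fun k => W k ω), (fun k => Z k ω))) := by
    intro k
    have h1 := ent_pair_le hq hp (fun ω => fun j : {j : Fin K // j ≠ k} => W j.1 ω)
      (fun ω => fun j => Z j ω)
    have h2 := ent_le_logb_card hq hp (fun ω => fun j : {j : Fin K // j ≠ k} => W j.1 ω)
    have h3 : Real.logb q (Fintype.card ({j : Fin K // j ≠ k} → Fin L → F)) = (K - 1) * L := by
      have hc : Fintype.card {j : Fin K // j ≠ k} = K - 1 := by
        simp [Fintype.card_subtype_compl]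
      rw [Fintype.card_fun, Fintype.card_fun, hc, Fintype.card_fin, ← hqdef]
      push_cast
      rw [Real.logb_pow, Real.logb_pow, Real.logb_self_eq_one hq', Nat.cast_sub (by omega)]
      push_cast
      ring
    rw [h3] at h2
    change ent q p (V k) ≤ _ at h1
    linarith
  have hUser : ∀ k, (L : ℝ) ≤ ∑ i ∈ Bset K B k, condEnt q p (Xm k i) (V k) := by
    intro k
    refine le_trans ?_ (ent_family_le hq hp (Xm k) (V k) (Bset K B k))
    rw [condEnt]
    have h : ent q p (fun ω => ((fun k => W k ω), (fun k => Z k ω))) ≤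
        ent q p (fun ω => ((fun i : {i // i ∈ Bset K B k} => Xm k i.1 ω), V k ω)) := by
      refine ent_mono hq hp fun ω ω' h0 h0' e => ?_
      simp only [Prod.mk.injEq] at e
      obtain ⟨eX, eV⟩ := e
      have eV' := eV
      simp only [V, Prod.mk.injEq] at eV'
      refine Prod.ext ?_ eV'.2
      have hother : ∀ j, j ≠ k → W j ω = W j ω' := fun j hj => congrFun eV'.1 ⟨j, hj⟩
      -- all relay messages agree, so the recovered sums agree, and `W k` is the sum minus the rest
      have hsum : ∑ j, W j ω = ∑ j, W j ω' := by
        refine dRec ω ω' h0 h0' ?_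
        funext i
        refine dY i ω ω' h0 h0' ?_
        funext j
        have hj := (mem_U _ _).1 j.2
        by_cases hjk : j.1 = k
        · have hi : i ∈ Bset K B k := hjk ▸ hj
          have := congrFun eX ⟨i, hi⟩
          simpa [hjk] using this
        · exact dXV k i j.1 hj hjk ω ω' h0 h0' eV
      funext j
      by_cases hj : j = k
      · subst hj
        rw [← Finset.add_sum_erase _ _ (Finset.mem_univ j),
          ← Finset.add_sum_erase _ (fun j => W j ω') (Finset.mem_univ j),
          Finset.sum_congr rfl fun i hi => hother i (Finset.ne_of_mem_erase hi)] at hsum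
        exact add_right_cancel hsum
      · exact hother j hj
    have := entV k
    linarith
  have hRelay : ∀ i, ∑ k ∈ Uset K B i, condEnt q p (Xm k i) (V k) ≤ ent q p Zsig := by
    intro i
    have h := sum_le_ent_family
      (fun k => ({j : Fin K // j ≠ k} → Fin L → F) × (Fin K → ζ)) hq hp
      (fun k => Xm k i) V (fun ω => fun k => Z k ω) (Uset K B i)
      (fun k ω ω' _ _ e => (Prod.ext_iff.1 e).2)
      (fun k j hj hjk => dXV k i j ((mem_U _ _).1 hj) hjk)
    have h2 := ent_pair_le hq hp (fun ω => fun k : {k // k ∈ Uset K B i} => Xm k.1 i ω)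
      (fun ω => fun k => Z k ω)
    have h3 := hM i
    rw [condEnt] at h
    linarith
  have hdouble : (K : ℝ) * L ≤ K * ent q p Zsig := calc
    (K : ℝ) * L = ∑ _k : Fin K, (L : ℝ) := by simp
    _ ≤ ∑ k, ∑ i ∈ Bset K B k, condEnt q p (Xm k i) (V k) := Finset.sum_le_sum fun k _ => hUser k
    _ = ∑ i, ∑ k ∈ Uset K B i, condEnt q p (Xm k i) (V k) :=
      Finset.sum_comm' fun k i => by simp [mem_U]
    _ ≤ ∑ _i : Fin K, ent q p Zsig := Finset.sum_le_sum fun i _ => hRelay i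
    _ = K * ent q p Zsig := by simp
  exact le_of_mul_le_mul_left hdouble (by exact_mod_cast (by omega : 0 < K))
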